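/- Let f_1, f_2 : ℝ² → ℝ be convex polynomial functions with f_1(0,0) = f_2(0,0) = 0, let A = {(x, y, z) ∈ ℝ³ : z ≥ f_1(x, y) and z ≥ f_2(x, y)}, and let C = {(x, y, z) ∈ ℝ³ : z = f_1(x, y) = f_2(x, y)}. Let φ : ℝ → ℝ³ be analytic at 0 with φ(s) = (α_1, α_2, 0)s + (β_1, β_2, β_3)s² + O(s³) as s → 0, where (α_1, α_2) ≠ (0,0), and φ(s) ∈ C for all s in a neighborhood of 0 and there is a neighborhood U of the origin in ℝ³ with C ∩ U contained in the image of φ. Let (a, b) ∈ ℝ², B = {t·(a, b, 0) : t ∈ ℝ}, and assume the three vectors (a, b, 0), (−∂f_1/∂x(0,0), −∂f_1/∂y(0,0), 1), (−∂f_2/∂x(0,0), −∂f_2/∂y(0,0), 1) are linearly independent. Suppose either (a, b, 0) ≠ c·(α_1, α_2, 0) for every c ≠ 0, or (a, b, 0) = c·(α_1, α_2, 0) for some c ≠ 0 and the unique solution (λ_1, λ_2, μ) of (β_1, β_2, β_3) = λ_1(−∂f_1/∂x(0,0), −∂f_1/∂y(0,0), 1) + λ_2(−∂f_2/∂x(0,0),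 −∂f_2/∂y(0,0), 1) + μ(a, b, 0) satisfies λ_1 λ_2 < 0. Then there exists ε > 0 such that P_A(p) ∉ C for every p ∈ B with 0 < ‖p‖ < ε. -/

import Mathlib

open Filter

/-- `u` is the metric projection of `p` onto `S`. -/
def IsMetricProj {E : Type*} [NormedAddCommGroup E] (S : Set E) (p u : E) : Prop :=
  u ∈ S ∧ ∀ s ∈ S, ‖u - p‖ ≤ ‖s - p‖

/-- The point (a, b, c) of Euclidean 3-space. -/
noncomputable def e3 (a b c : ℝ) : EuclideanSpace ℝ (Fin 3) :=
  (WithLp.equiv 2 (Fin 3 → ℝ)).symm ![a, b, c]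

/-! Let `hᵢ (x, y, z) = z - fᵢ (x, y)`, so that `A = {h₁, h₂ ≥ 0}` and `C = {h₁ = h₂ = 0}`, and let
`nᵢ` be the gradient of `hᵢ` at the origin. Suppose that the projection `w` of a small `p = t • d`
lies on `C`. By Farkas' lemma `w - p` is a nonnegative combination of the gradients of the `hᵢ` at
`w`. Since `n₁` and `n₂` are independent, `C` is near the origin the curve `φ`, so `w = φ s` with
`s` small. In the basis `d, n₁, n₂` the leading normal part of `φ s` is `sᵏ • (lam₁ • n₁ + lam₂ •
n₂)` with `lam₁ * lam₂ < 0`: if the tangent `α` of `φ` at `0` is not parallel to `d` then `k = 1`,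
and `lam₁ + lam₂ = 0` because `α` and `d` are horizontal while `nᵢ` has third coordinate `1`;
otherwise `k = 2` and the sign condition is assumed. The gradients at `φ s` are close to the `nᵢ`,
so for small `s ≠ 0` the multipliers also have opposite signs, which is impossible. Finally `s = 0`
would put `d` in the span of the `nᵢ`. -/

open Asymptotics Matrix Module Set
open scoped Gradient InnerProductSpace Topology

section LinearForms

variable {V ι : Type*} [NormedAddCommGroup V] [NormedSpace ℝ V] [Finite ι] {v : ι → V}

lemma exists_strongDual_apply_eq_of_linearIndependent (hv : LinearIndependent ℝ v) (c : ι → ℝ) :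
    ∃ f : StrongDual ℝ V, ∀ i, f (v i) = c i := by
  have := Fintype.ofFinite ι
  classical
  obtain ⟨f, hf⟩ := (SeparatingDual.dualMap_surjective_iff (R := ℝ)
    (f := Fintype.linearCombination ℝ v)).mpr
    (linearIndependent_iff_injective_fintypeLinearCombination.mp hv)
    (Fintype.linearCombination ℝ c)
  refine ⟨f, fun i => ?_⟩
  simpa [Fintype.linearCombination_apply_single] using LinearMap.congr_fun hf (Pi.single i 1)

lemma exists_strongDual_apply_eq_zero_of_notMem_span {d : V} (hv : LinearIndependent ℝ v)
    (hd : d ∉ Submodule.span ℝ (range v)) (c : ι → ℝ) :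
    ∃ f : StrongDual ℝ V, f d = 0 ∧ ∀ i, f (v i) = c i := by
  obtain ⟨f, hf⟩ := exists_strongDual_apply_eq_of_linearIndependent (hv.option hd)
    (fun o => o.elim 0 c)
  exact ⟨f, hf none, fun i => hf (some i)⟩

end LinearForms

section Multipliers

lemma eventually_pos_of_hasFDerivAt_pos {V : Type*} [NormedAddCommGroup V] [NormedSpace ℝ V]
    {h : V → ℝ} {h' : StrongDual ℝ V} {w x : V}
    (hh : HasFDerivAt h h' w) (hw : h w = 0) (hx : 0 < h' x) :
    ∀ᶠ t : ℝ in 𝓝[>] 0, 0 < h (w + t • x) := by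
  have hslope := (hh.hasLineDerivAt x).tendsto_slope_zero_right
  filter_upwards [hslope.eventually (lt_mem_nhds hx), self_mem_nhdsWithin] with t ht (htpos : 0 < t)
  rw [hw, sub_zero, smul_eq_mul] at ht
  exact pos_of_mul_pos_right ht (inv_pos.mpr htpos).le

variable {E ι : Type*} [NormedAddCommGroup E] [InnerProductSpace ℝ E]

lemma IsMetricProj.inner_sub_nonneg {S : Set E} {p w x : E} (hw : IsMetricProj S p w)
    (hx : ∃ᶠ t : ℝ in 𝓝[>] 0, w + t • x ∈ S) : 0 ≤ ⟪w - p, x⟫_ℝ := by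
  have hmin : IsLocalMinOn (fun y => ‖y - p‖ ^ 2) S w :=
    IsMinOn.localize fun y hy => pow_le_pow_left₀ (norm_nonneg _) (hw.2 y hy) 2
  have hderiv := ((hasFDerivAt_id w).sub_const p).norm_sq
  have hnonneg := hmin.hasFDerivWithinAt_nonneg hderiv.hasFDerivWithinAt
    (mem_posTangentConeAt_of_frequently_mem hx)
  simpa [inner_sub_left] using hnonneg

variable [CompleteSpace E]

lemma exists_forall_inner_eq_of_linearIndependent [Finite ι] {n : ι → E}
    (hn : LinearIndependent ℝ n) (c : ι → ℝ) : ∃ x, ∀ i, ⟪n i, x⟫_ℝ = c i := by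
  obtain ⟨f, hf⟩ := exists_strongDual_apply_eq_of_linearIndependent hn c
  refine ⟨(InnerProductSpace.toDual ℝ E).symm f, fun i => ?_⟩
  rw [real_inner_comm, InnerProductSpace.toDual_symm_apply, hf]

lemma inner_nonneg_of_forall_inner_pos [Finite ι] {n : ι → E} {u x : E}
    (hn : LinearIndependent ℝ n)
    (hu : ∀ y, (∀ i, 0 < ⟪n i, y⟫_ℝ) → 0 ≤ ⟪u, y⟫_ℝ) (hx : ∀ i, 0 ≤ ⟪n i, x⟫_ℝ) :
    0 ≤ ⟪u, x⟫_ℝ := by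
  obtain ⟨y, hy⟩ := exists_forall_inner_eq_of_linearIndependent hn fun _ => 1
  have hlim : Tendsto (fun t : ℝ => ⟪u, x + t • y⟫_ℝ) (𝓝[>] 0) (𝓝 ⟪u, x⟫_ℝ) := by
    have hcont : Continuous fun t : ℝ => ⟪u, x + t • y⟫_ℝ := by fun_prop
    simpa using (hcont.tendsto 0).mono_left nhdsWithin_le_nhds
  refine ge_of_tendsto hlim ?_
  filter_upwards [self_mem_nhdsWithin] with t (ht : 0 < t)
  refine hu _ fun i => ?_
  rw [inner_add_right, inner_smul_right, hy, mul_one]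
  exact add_pos_of_nonneg_of_pos (hx i) ht

lemma exists_nonneg_eq_sum_smul_of_forall_inner_pos [Fintype ι] {n : ι → E} {u : E}
    (hn : LinearIndependent ℝ n)
    (hu : ∀ x, (∀ i, 0 < ⟪n i, x⟫_ℝ) → 0 ≤ ⟪u, x⟫_ℝ) :
    ∃ l : ι → ℝ, (∀ i, 0 ≤ l i) ∧ u = ∑ i, l i • n i := by
  classical
  have hspan : u ∈ Submodule.span ℝ (range n) := by
    have : FiniteDimensional ℝ (Submodule.span ℝ (range n)) :=
      FiniteDimensional.span_of_finite ℝ (finite_range n)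
    rw [← (Submodule.span ℝ (range n)).orthogonal_orthogonal]
    intro y hy
    have hny : ∀ i, ⟪n i, y⟫_ℝ = 0 := fun i => hy _ (Submodule.subset_span (mem_range_self i))
    have hpos := inner_nonneg_of_forall_inner_pos hn hu fun i => (hny i).ge
    have hneg := inner_nonneg_of_forall_inner_pos (x := -y) hn hu fun i => by
      rw [inner_neg_right, hny, neg_zero]
    rw [inner_neg_right] at hneg
    rw [real_inner_comm]
    linarith
  obtain ⟨l, hl⟩ := (Submodule.mem_span_range_iff_exists_fun ℝ).mp hspan
  refine ⟨l, fun j => ?_, hl.symm⟩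
  obtain ⟨x, hx⟩ := exists_forall_inner_eq_of_linearIndependent hn (Pi.single j 1)
  have hlj : ⟪u, x⟫_ℝ = l j := by simp [← hl, sum_inner, inner_smul_left, hx, Pi.single_apply]
  rw [← hlj]
  refine inner_nonneg_of_forall_inner_pos hn hu fun i => ?_
  rw [hx]
  exact (Pi.single_nonneg.mpr zero_le_one : (0 : ι → ℝ) ≤ Pi.single j 1) i

lemma IsMetricProj.exists_nonneg_sub_eq_sum_smul_gradient [Fintype ι] {h : ι → E → ℝ} {p w : E}
    (hw : IsMetricProj {x | ∀ i, 0 ≤ h i x} p w) (hw₀ : ∀ i, h i w = 0)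
    (hh : ∀ i, DifferentiableAt ℝ (h i) w) (hn : LinearIndependent ℝ fun i => ∇ (h i) w) :
    ∃ l : ι → ℝ, (∀ i, 0 ≤ l i) ∧ w - p = ∑ i, l i • ∇ (h i) w := by
  refine exists_nonneg_eq_sum_smul_of_forall_inner_pos hn fun x hx => hw.inner_sub_nonneg ?_
  have hpos : ∀ᶠ t : ℝ in 𝓝[>] 0, ∀ i, 0 < h i (w + t • x) := eventually_all.mpr fun i =>
    eventually_pos_of_hasFDerivAt_pos (hh i).hasGradientAt.hasFDerivAt (hw₀ i) (hx i)
  exact (hpos.mono fun t ht i => (ht i).le).frequently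

end Multipliers

section Projection

variable {E : Type*} [NormedAddCommGroup E]

lemma IsMetricProj.norm_sub_le {S : Set E} {x p w : E} (hw : IsMetricProj S p w) (hx : x ∈ S) :
    ‖w - x‖ ≤ 2 * ‖p - x‖ := by
  calc ‖w - x‖ ≤ ‖w - p‖ + ‖p - x‖ := norm_sub_le_norm_sub_add_norm_sub w p x
    _ ≤ ‖x - p‖ + ‖p - x‖ := by gcongr; exact hw.2 x hx
    _ = 2 * ‖p - x‖ := by rw [norm_sub_rev x p, two_mul]

lemma eventually_forall_isMetricProj {S : Set E} {x : E} {P : E → Prop} (hx : x ∈ S)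
    (hP : ∀ᶠ w in 𝓝 x, P w) : ∀ᶠ p in 𝓝 x, ∀ w, IsMetricProj S p w → P w := by
  obtain ⟨r, hr, hball⟩ := Metric.eventually_nhds_iff.mp hP
  filter_upwards [Metric.ball_mem_nhds x (half_pos hr)] with p hp w hw
  refine hball ?_
  rw [Metric.mem_ball, dist_eq_norm] at hp
  rw [dist_eq_norm]
  linarith [hw.norm_sub_le hx]

end Projection

section Curve

variable {E F : Type*} [NormedAddCommGroup E] [NormedSpace ℝ E] [FiniteDimensional ℝ E]
  [NormedAddCommGroup F] [NormedSpace ℝ F]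

lemma eventually_eq_of_hasStrictFDerivAt_of_ker_eq_bot {h : E → F} {h' : E →L[ℝ] F} {x₀ : E}
    (hh : HasStrictFDerivAt h h' x₀) (hker : h'.ker = ⊥) :
    ∀ᶠ p in 𝓝 (x₀, x₀), h p.1 = h p.2 → p.1 = p.2 := by
  obtain ⟨K, -, hK⟩ := h'.toLinearMap.exists_antilipschitzWith hker
  have hinv : (fun p : E × E => p.1 - p.2) =O[𝓝 (x₀, x₀)] fun p => h' (p.1 - p.2) :=
    IsBigO.of_bound K (Eventually.of_forall fun p => h'.bound_of_antilipschitz hK _)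
  have hsub : (fun p : E × E => p.1 - p.2) =O[𝓝 (x₀, x₀)] fun p => h p.1 - h p.2 := by
    refine hinv.trans ?_
    have hlin := (hh.isLittleO.trans_isBigO hinv).right_isBigO_add
    simpa using hlin
  filter_upwards [hsub.eq_zero_imp] with p hp heq
  exact sub_eq_zero.mp (hp (sub_eq_zero.mpr heq))

lemma eventually_mem_image_of_hasStrictDerivAt {h : E → F} {h' : E →L[ℝ] F} {φ : ℝ → E} {α : E}
    {s₀ : ℝ} (hh : HasStrictFDerivAt h h' (φ s₀)) (hφ : HasStrictDerivAt φ α s₀) (hα : α ≠ 0)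
    (hker : h'.ker ≤ ℝ ∙ α) (hconst : ∀ᶠ s in 𝓝 s₀, h (φ s) = h (φ s₀)) {S : Set ℝ}
    (hS : S ∈ 𝓝 s₀) : ∀ᶠ w in 𝓝 (φ s₀), h w = h (φ s₀) → w ∈ φ '' S := by
  obtain ⟨ℓ, hℓ⟩ := SeparatingDual.exists_eq_one (R := ℝ) hα
  have hinj : (h'.prod ℓ).ker = ⊥ := by
    refine (Submodule.eq_bot_iff _).mpr fun v hv => ?_
    obtain ⟨hv₁, hv₂⟩ : h' v = 0 ∧ ℓ v = 0 := by simpa using hv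
    obtain ⟨c, rfl⟩ := Submodule.mem_span_singleton.mp (hker hv₁)
    have hc : c = 0 := by simpa [hℓ] using hv₂
    rw [hc, zero_smul]
  have hlocal := eventually_eq_of_hasStrictFDerivAt_of_ker_eq_bot
    (hh.prodMk ℓ.hasStrictFDerivAt) hinj
  rw [nhds_prod_eq, eventually_prod_self_iff'] at hlocal
  obtain ⟨U, hU, hUlocal⟩ := hlocal
  have hopen : map (ℓ ∘ φ) (𝓝 s₀) = 𝓝 (ℓ (φ s₀)) :=
    HasStrictDerivAt.map_nhds_eq (ℓ.hasStrictFDerivAt.comp_hasStrictDerivAt s₀ hφ) (by simp [hℓ])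
  have hgood : {s ∈ S | h (φ s) = h (φ s₀) ∧ φ s ∈ U} ∈ 𝓝 s₀ := by
    filter_upwards [hS, hconst, hφ.hasDerivAt.continuousAt hU] with s hs hhs hsU
    exact ⟨hs, hhs, hsU⟩
  have hpull : ∀ᶠ w in 𝓝 (φ s₀), ℓ w ∈ ℓ ∘ φ '' {s ∈ S | h (φ s) = h (φ s₀) ∧ φ s ∈ U} :=
    ℓ.continuous.continuousAt (hopen ▸ image_mem_map hgood)
  filter_upwards [hpull, hU] with w ⟨s, ⟨hs, hhs, hsU⟩, hℓs⟩ hwU hw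
  exact ⟨s, hs, hUlocal (φ s) hsU w hwU (Prod.ext (hhs.trans hw.symm) hℓs)⟩

end Curve

section Obstruction

variable {X ι : Type*} [Fintype ι] {l : Filter X} {lam : ι → ℝ} {i j : ι}

lemma eventually_forall_nonneg_mulVec_ne_smul [DecidableEq ι] {M : X → Matrix ι ι ℝ}
    {b : X → ι → ℝ} (hM : Tendsto M l (𝓝 1)) (hb : Tendsto b l (𝓝 lam))
    (hlam : lam i * lam j < 0) :
    ∀ᶠ x in l, ∀ m : ι → ℝ, (∀ k, 0 ≤ m k) → ∀ r : ℝ, r ≠ 0 → M x *ᵥ m ≠ r • b x := by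
  have hadj : Tendsto (fun x => (M x).adjugate *ᵥ b x) l (𝓝 lam) := by
    have hcont : Continuous fun p : Matrix ι ι ℝ × (ι → ℝ) => p.1.adjugate *ᵥ p.2 :=
      continuous_fst.matrix_adjugate.matrix_mulVec continuous_snd
    simpa [Function.comp_def] using (hcont.tendsto (1, lam)).comp (hM.prodMk_nhds hb)
  have hneg :=
    ((tendsto_pi_nhds.mp hadj i).mul (tendsto_pi_nhds.mp hadj j)).eventually_lt_const hlam
  filter_upwards [hneg] with x hx m hm r hr hMm
  have hcramer (k : ι) : (M x).det * m k = r * ((M x).adjugate *ᵥ b x) k := by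
    have hvec : (M x).adjugate *ᵥ (M x *ᵥ m) = (M x).adjugate *ᵥ (r • b x) := by rw [hMm]
    rw [mulVec_mulVec, adjugate_mul, smul_mulVec, one_mulVec, mulVec_smul] at hvec
    exact congrFun hvec k
  have hprod : (M x).det ^ 2 * (m i * m j) =
      r ^ 2 * (((M x).adjugate *ᵥ b x) i * ((M x).adjugate *ᵥ b x) j) := by
    linear_combination (M x).det * m j * hcramer i + r * ((M x).adjugate *ᵥ b x) i * hcramer j
  have hlhs : 0 ≤ (M x).det ^ 2 * (m i * m j) :=
    mul_nonneg (sq_nonneg _) (mul_nonneg (hm i) (hm j))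
  exact (mul_neg_of_pos_of_neg (sq_pos_of_ne_zero hr) hx).not_ge (hprod ▸ hlhs)

lemma eventually_ne_sum_smul_add_smul_of_isLittleO {E : Type*} [NormedAddCommGroup E]
    [NormedSpace ℝ E] {N : ι → X → E} {n : ι → E} {d : E} {ψ : X → E} {τ r : X → ℝ}
    (hn : LinearIndependent ℝ n) (hd : d ∉ Submodule.span ℝ (range n))
    (hN : ∀ k, Tendsto (N k) l (𝓝 (n k)))
    (hψ : (fun x => ψ x - τ x • d - r x • ∑ k, lam k • n k) =o[l] r) (hlam : lam i * lam j < 0) :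
    ∀ᶠ x in l, r x ≠ 0 → ∀ m : ι → ℝ, (∀ k, 0 ≤ m k) → ∀ t : ℝ,
      ψ x ≠ ∑ k, m k • N k x + t • d := by
  classical
  choose c hcd hcn using fun k =>
    exists_strongDual_apply_eq_zero_of_notMem_span hn hd (Pi.single k 1)
  set ρ : X → E := fun x => ψ x - τ x • d - r x • ∑ k, lam k • n k with hρ
  have hM : Tendsto (fun x => Matrix.of fun k k' => c k (N k' x)) l (𝓝 1) := by
    refine tendsto_pi_nhds.mpr fun k => tendsto_pi_nhds.mpr fun k' => ?_
    have hck := ((c k).continuous.tendsto (n k')).comp (hN k')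
    rwa [hcn, ← Matrix.one_eq_pi_single] at hck
  have hb : Tendsto (fun x k => lam k + c k ((r x)⁻¹ • ρ x)) l (𝓝 lam) := by
    refine tendsto_pi_nhds.mpr fun k => ?_
    simpa using (((c k).continuous.tendsto 0).comp hψ.tendsto_inv_smul_nhds_zero).const_add (lam k)
  filter_upwards [eventually_forall_nonneg_mulVec_ne_smul hM hb hlam] with x hx hr m hm t hψx
  refine hx m hm (r x) hr (funext fun k => ?_)
  have hck : c k (ψ x) = r x * (lam k + c k ((r x)⁻¹ • ρ x)) := by
    have hρx : c k (ρ x) = c k (ψ x) - r x * lam k := by simp [hρ, hcd, hcn, Pi.single_apply]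
    rw [map_smul, smul_eq_mul, hρx]
    field_simp
    ring
  calc (Matrix.of (fun k k' => c k (N k' x)) *ᵥ m) k = c k (ψ x) := by
        simp [hψx, hcd, mulVec, dotProduct, mul_comm]
    _ = _ := hck

end Obstruction

section Gradient

variable {E ι : Type*} [NormedAddCommGroup E] [InnerProductSpace ℝ E]

lemma mem_span_singleton_of_forall_inner_eq_zero [FiniteDimensional ℝ E] [Fintype ι]
    (hE : finrank ℝ E = Fintype.card ι + 1) {n : ι → E} {α v : E} (hn : LinearIndependent ℝ n)
    (hα : α ≠ 0) (hnα : ∀ i, ⟪n i, α⟫_ℝ = 0) (hnv : ∀ i, ⟪n i, v⟫_ℝ = 0) : v ∈ ℝ ∙ α := by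
  have hmem {x : E} (hx : ∀ i, ⟪n i, x⟫_ℝ = 0) : x ∈ (Submodule.span ℝ (range n))ᗮ := by
    rw [← Submodule.span_singleton_le_iff_mem]
    refine (Submodule.isOrtho_span.mpr ?_).le
    rintro _ rfl _ ⟨i, rfl⟩
    rw [real_inner_comm, hx]
  have hdim : finrank ℝ (Submodule.span ℝ (range n))ᗮ = 1 := by
    have := (Submodule.span ℝ (range n)).finrank_add_finrank_orthogonal
    rw [finrank_span_eq_card hn] at this
    omega
  obtain ⟨c, hc⟩ := (finrank_eq_one_iff_of_nonzero' (⟨α, hmem hnα⟩ : (Submodule.span ℝ (range n))ᗮ)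
    (by simpa using hα)).mp hdim ⟨v, hmem hnv⟩
  exact Submodule.mem_span_singleton.mpr ⟨c, congrArg Subtype.val hc⟩

variable [CompleteSpace E]

lemma continuousAt_gradient_of_contDiffAt {h : E → ℝ} {x : E} (hh : ContDiffAt ℝ 1 h x) :
    ContinuousAt (∇ h) x :=
  (InnerProductSpace.toDual ℝ E).symm.continuous.continuousAt.comp
    (hh.continuousAt_fderiv one_ne_zero)

lemma inner_gradient_eq_zero_of_eventually_eq_zero {h : E → ℝ} {φ : ℝ → E} {α : E} {s₀ : ℝ}
    (hh : DifferentiableAt ℝ h (φ s₀)) (hφ : HasDerivAt φ α s₀)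
    (hzero : ∀ᶠ s in 𝓝 s₀, h (φ s) = 0) : ⟪∇ h (φ s₀), α⟫_ℝ = 0 := by
  have hderiv := hh.hasGradientAt.hasFDerivAt.comp_hasDerivAt s₀ hφ
  exact hderiv.unique ((hasDerivAt_const s₀ (0 : ℝ)).congr_of_eventuallyEq hzero)

end Gradient

section ContactCurve

variable {E ι : Type*} [NormedAddCommGroup E] [InnerProductSpace ℝ E] [FiniteDimensional ℝ E]
  [Fintype ι] {h : ι → E → ℝ} {φ : ℝ → E} {α d : E}

lemma eventually_mem_image_of_linearIndependent_gradient (hE : finrank ℝ E = Fintype.card ι + 1)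
    {s₀ : ℝ} (hh : ∀ i, ContDiffAt ℝ 1 (h i) (φ s₀))
    (hn : LinearIndependent ℝ fun i => ∇ (h i) (φ s₀)) (hφ : HasStrictDerivAt φ α s₀) (hα : α ≠ 0)
    (hzero : ∀ᶠ s in 𝓝 s₀, ∀ i, h i (φ s) = 0) {S : Set ℝ} (hS : S ∈ 𝓝 s₀) :
    ∀ᶠ w in 𝓝 (φ s₀), (∀ i, h i w = 0) → w ∈ φ '' S := by
  have hdiff (i : ι) : DifferentiableAt ℝ (h i) (φ s₀) := (hh i).differentiableAt one_ne_zero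
  have hstrict : HasStrictFDerivAt (fun w i => h i w)
      (ContinuousLinearMap.pi fun i => fderiv ℝ (h i) (φ s₀)) (φ s₀) :=
    hasStrictFDerivAt_pi.mpr fun i => (hh i).hasStrictFDerivAt one_ne_zero
  have hker : (ContinuousLinearMap.pi fun i => fderiv ℝ (h i) (φ s₀)).ker ≤ ℝ ∙ α := by
    intro v hv
    refine mem_span_singleton_of_forall_inner_eq_zero hE hn hα (fun i =>
      inner_gradient_eq_zero_of_eventually_eq_zero (hdiff i) hφ.hasDerivAt
        (hzero.mono fun s hs => hs i)) fun i => ?_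
    rw [inner_gradient_left]
    exact congrFun hv i
  have hzero₀ := hzero.self_of_nhds
  have hcover := eventually_mem_image_of_hasStrictDerivAt hstrict hφ hα hker
    (hzero.mono fun s hs => funext fun i => (hs i).trans (hzero₀ i).symm) hS
  exact hcover.mono fun w hw hw₀ => hw (funext fun i => (hw₀ i).trans (hzero₀ i).symm)

theorem eventually_forall_isMetricProj_not_forall_eq_zero
    (hE : finrank ℝ E = Fintype.card ι + 1) {τ r : ℝ → ℝ} {lam : ι → ℝ} {i j : ι}
    (hh : ∀ i, ContDiffAt ℝ 1 (h i) (φ 0)) (hn : LinearIndependent ℝ fun i => ∇ (h i) (φ 0))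
    (hd : d ∉ Submodule.span ℝ (range fun i => ∇ (h i) (φ 0)))
    (hφ : HasStrictDerivAt φ α 0) (hα : α ≠ 0) (hzero : ∀ᶠ s in 𝓝 0, ∀ i, h i (φ s) = 0)
    (hexp : (fun s => φ s - φ 0 - τ s • d - r s • ∑ i, lam i • ∇ (h i) (φ 0)) =o[𝓝 0] r)
    (hr : ∀ s ≠ 0, r s ≠ 0) (hlam : lam i * lam j < 0) :
    ∀ᶠ p in 𝓝 (φ 0), p - φ 0 ∈ ℝ ∙ d → p ≠ φ 0 →
      ∀ w, IsMetricProj {x | ∀ i, 0 ≤ h i x} p w → ¬∀ i, h i w = 0 := by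
  have hgrad (i : ι) : ContinuousAt (∇ (h i)) (φ 0) := continuousAt_gradient_of_contDiffAt (hh i)
  have hobstr := eventually_ne_sum_smul_add_smul_of_isLittleO hn hd
    (fun i => (hgrad i).tendsto.comp hφ.hasDerivAt.continuousAt.tendsto) hexp hlam
  have hdiff : ∀ᶠ w in 𝓝 (φ 0), ∀ i, DifferentiableAt ℝ (h i) w := eventually_all.mpr fun i =>
    ((hh i).eventually (by simp)).mono fun w hw => hw.differentiableAt one_ne_zero
  have hindep : ∀ᶠ w in 𝓝 (φ 0), LinearIndependent ℝ fun i => ∇ (h i) w :=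
    (continuousAt_pi.mpr hgrad).eventually hn.eventually
  have hcover := eventually_mem_image_of_linearIndependent_gradient hE hh hn hφ hα hzero hobstr
  have hzero₀ (i : ι) : 0 ≤ h i (φ 0) := (hzero.self_of_nhds i).ge
  filter_upwards [eventually_forall_isMetricProj (S := {x | ∀ i, 0 ≤ h i x}) hzero₀
    (hdiff.and (hindep.and hcover))] with p hp hpd hpne w hw hw₀
  obtain ⟨hwdiff, hwindep, hwcover⟩ := hp w hw
  obtain ⟨m, hm, hkkt⟩ := hw.exists_nonneg_sub_eq_sum_smul_gradient hw₀ hwdiff hwindep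
  obtain ⟨s, hs, rfl⟩ := hwcover hw₀
  obtain ⟨t, ht⟩ := Submodule.mem_span_singleton.mp hpd
  have hcombo : φ s - φ 0 = ∑ i, m i • ∇ (h i) (φ s) + t • d := by rw [← hkkt, ht]; abel
  rcases eq_or_ne s 0 with rfl | hs₀
  · have ht₀ : t ≠ 0 := fun h₀ => hpne (sub_eq_zero.mp (by rw [← ht, h₀, zero_smul]))
    refine hd ((Submodule.smul_mem_iff _ ht₀).mp ?_)
    have htd : t • d = -∑ i, m i • ∇ (h i) (φ 0) := by
      rw [sub_self] at hcombo
      exact (neg_eq_of_add_eq_zero_right hcombo.symm).symm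
    rw [htd]
    exact Submodule.neg_mem _ (Submodule.sum_mem _ fun i _ =>
      Submodule.smul_mem _ _ (Submodule.subset_span (mem_range_self i)))
  · exact hs (hr s hs₀) m hm t hcombo

end ContactCurve

section LeadingTerm

variable {E : Type*} [NormedAddCommGroup E] [NormedSpace ℝ E] {φ : ℝ → E} {d α β : E}

lemma apply_zero_eq_zero_of_isLittleO_sq
    (hφ : (fun s => φ s - s • α - s ^ 2 • β) =o[𝓝 0] fun s => s ^ 2) : φ 0 = 0 := by
  simpa using hφ.isBigO.eq_zero_imp.self_of_nhds

lemma isLittleO_sub_smul_of_isLittleO_sq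
    (hφ : (fun s => φ s - s • α - s ^ 2 • β) =o[𝓝 0] fun s => s ^ 2) :
    (fun s => φ s - s • α) =o[𝓝 0] fun s => s := by
  have hsq : (fun s : ℝ => s ^ 2) =o[𝓝 0] fun s => s := isLittleO_pow_id one_lt_two
  have hβ : (fun s : ℝ => s ^ 2 • β) =O[𝓝 0] fun s => s ^ 2 :=
    IsBigO.of_bound ‖β‖ (Eventually.of_forall fun s => (norm_smul_le _ _).trans_eq (mul_comm _ _))
  simpa using (hφ.trans hsq).add (hβ.trans_isLittleO hsq)

lemma hasDerivAt_zero_of_isLittleO_sq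
    (hφ : (fun s => φ s - s • α - s ^ 2 • β) =o[𝓝 0] fun s => s ^ 2) : HasDerivAt φ α 0 := by
  rw [hasDerivAt_iff_isLittleO]
  simpa [apply_zero_eq_zero_of_isLittleO_sq hφ] using isLittleO_sub_smul_of_isLittleO_sq hφ

lemma exists_eq_smul_add_sum_smul_of_notMem_span (hE : finrank ℝ E = 3) {n : Fin 2 → E}
    (hn : LinearIndependent ℝ n) (hd : d ∉ Submodule.span ℝ (range n)) {z : StrongDual ℝ E}
    (hzn : ∀ i, z (n i) = 1) (hzd : z d = 0) (hzα : z α = 0) (hα : α ∉ ℝ ∙ d) :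
    ∃ (μ : ℝ) (lam : Fin 2 → ℝ), α = μ • d + ∑ i, lam i • n i ∧ lam 0 * lam 1 < 0 := by
  have hcard : Fintype.card (Fin 3) = finrank ℝ E := by rw [hE, Fintype.card_fin]
  have hspan : α ∈ Submodule.span ℝ (range (Fin.cons d n : Fin 3 → E)) := by
    rw [(linearIndependent_finCons.mpr ⟨hn, hd⟩).span_eq_top_of_card_eq_finrank hcard]
    exact Submodule.mem_top
  obtain ⟨c, hc⟩ := (Submodule.mem_span_range_iff_exists_fun ℝ).mp hspan
  rw [Fin.sum_univ_succ] at hc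
  have hsum : c 1 + c 2 = 0 := by
    simpa [Fin.sum_univ_two, hzn, hzd, hzα] using congrArg z hc
  have hc₁ : c 1 ≠ 0 := fun h₀ => hα <| Submodule.mem_span_singleton.mpr ⟨c 0, by
    have h₂ : c 2 = 0 := by linarith
    simpa [Fin.sum_univ_two, h₀, h₂] using hc⟩
  refine ⟨c 0, fun i => c i.succ, hc.symm, ?_⟩
  have hc₂ : c 2 = -c 1 := by linarith
  calc c 1 * c 2 = -(c 1 ^ 2) := by rw [hc₂]; ring
    _ < 0 := neg_lt_zero.mpr (sq_pos_of_ne_zero hc₁)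

lemma exists_isLittleO_pow_of_isLittleO_sq (hE : finrank ℝ E = 3) {n : Fin 2 → E}
    (hn : LinearIndependent ℝ n) (hd : d ∉ Submodule.span ℝ (range n))
    {z : StrongDual ℝ E} (hzn : ∀ i, z (n i) = 1) (hzd : z d = 0) (hzα : z α = 0)
    (hφ : (fun s => φ s - s • α - s ^ 2 • β) =o[𝓝 0] fun s => s ^ 2)
    (hcase : α ∉ ℝ ∙ d ∨ α ∈ ℝ ∙ d ∧ ∃ (μ : ℝ) (lam : Fin 2 → ℝ),
      β = μ • d + ∑ i, lam i • n i ∧ lam 0 * lam 1 < 0) :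
    ∃ (τ : ℝ → ℝ) (k : ℕ) (lam : Fin 2 → ℝ),
      (fun s => φ s - τ s • d - s ^ k • ∑ i, lam i • n i) =o[𝓝 0] (fun s => s ^ k) ∧
        lam 0 * lam 1 < 0 := by
  rcases hcase with hα | ⟨hα, μ, lam, hβ, hlam⟩
  · obtain ⟨μ, lam, rfl, hlam⟩ := exists_eq_smul_add_sum_smul_of_notMem_span hE hn hd hzn hzd hzα hα
    refine ⟨fun s => s * μ, 1, lam, ?_, hlam⟩
    simp only [pow_one]
    refine (isLittleO_sub_smul_of_isLittleO_sq hφ).congr_left fun s => ?_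
    module
  · obtain ⟨c, rfl⟩ := Submodule.mem_span_singleton.mp hα
    refine ⟨fun s => s * c + s ^ 2 * μ, 2, lam, hφ.congr_left fun s => ?_, hlam⟩
    rw [hβ]
    module

end LeadingTerm

section Polynomial

variable {σ : Type*} [Fintype σ] (f : MvPolynomial σ ℝ) (v : σ → ℝ)

lemma contDiffAt_mvPolynomial_eval {n : WithTop ℕ∞} :
    ContDiffAt ℝ n (fun v : σ → ℝ => MvPolynomial.eval v f) v :=
  (AnalyticOnNhd.eval_mvPolynomial f v (mem_univ v)).contDiffAt

lemma hasFDerivAt_mvPolynomial_eval :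
    HasFDerivAt (fun v : σ → ℝ => MvPolynomial.eval v f)
      (∑ i, MvPolynomial.eval v (MvPolynomial.pderiv i f) •
        (ContinuousLinearMap.proj i : StrongDual ℝ (σ → ℝ))) v := by
  classical
  induction f using MvPolynomial.induction_on with
  | C r => simpa using hasFDerivAt_const (𝕜 := ℝ) r v
  | add p q hp hq => simpa [add_smul, Finset.sum_add_distrib] using hp.fun_add hq
  | mul_X p i hp =>
    simp only [map_mul, MvPolynomial.eval_X]
    refine (hp.fun_mul (hasFDerivAt_apply i v)).congr_fderiv ?_
    ext w
    simp [MvPolynomial.pderiv_X, Pi.single_apply, apply_ite (MvPolynomial.eval v), add_mul,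
      Finset.sum_add_distrib, Finset.mul_sum, mul_assoc]

end Polynomial

section Graph

lemma e3_zero : e3 0 0 0 = 0 := by
  ext i
  fin_cases i <;> rfl

lemma e3_inj {a b c a' b' c' : ℝ} : e3 a b c = e3 a' b' c' ↔ a = a' ∧ b = b' ∧ c = c' := by
  simp [e3]

lemma e3_add (a b c a' b' c' : ℝ) : e3 a b c + e3 a' b' c' = e3 (a + a') (b + b') (c + c') := by
  ext i
  fin_cases i <;> rfl

lemma e3_sub (a b c a' b' c' : ℝ) : e3 a b c - e3 a' b' c' = e3 (a - a') (b - b') (c - c') := by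
  ext i
  fin_cases i <;> rfl

lemma smul_e3 (t a b c : ℝ) : t • e3 a b c = e3 (t * a) (t * b) (t * c) := by
  ext i
  fin_cases i <;> rfl

lemma isLittleO_e3 {X : Type*} {l : Filter X} {u v w g : X → ℝ} (hu : u =o[l] g) (hv : v =o[l] g)
    (hw : w =o[l] g) : (fun x => e3 (u x) (v x) (w x)) =o[l] g := by
  refine ((EuclideanSpace.equiv (Fin 3) ℝ).symm.isBigO_comp
    (fun x => ![u x, v x, w x]) l).trans_isLittleO (isLittleO_pi.mpr fun i => ?_)
  fin_cases i
  exacts [hu, hv, hw]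

lemma contDiffAt_e3 {n : WithTop ℕ∞} {u v w : ℝ → ℝ} {s : ℝ} (hu : ContDiffAt ℝ n u s)
    (hv : ContDiffAt ℝ n v s) (hw : ContDiffAt ℝ n w s) :
    ContDiffAt ℝ n (fun s => e3 (u s) (v s) (w s)) s := by
  refine contDiffAt_euclidean.mpr fun i => ?_
  fin_cases i
  exacts [hu, hv, hw]

/-- The signed vertical distance from the graph of `f` to the point `x` of Euclidean 3-space. It is
nonnegative on the epigraph of `f` and vanishes on the graph. -/
def heightAboveGraph (f : (Fin 2 → ℝ) → ℝ) (x : EuclideanSpace ℝ (Fin 3)) : ℝ :=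
  x 2 - f ![x 0, x 1]

lemma contDiffAt_heightAboveGraph {n : WithTop ℕ∞} {f : (Fin 2 → ℝ) → ℝ}
    {x : EuclideanSpace ℝ (Fin 3)} (hf : ContDiffAt ℝ n f ![x 0, x 1]) :
    ContDiffAt ℝ n (heightAboveGraph f) x := by
  have hbase : ContDiffAt ℝ n (fun x : EuclideanSpace ℝ (Fin 3) => ![x 0, x 1]) x := by
    refine contDiffAt_pi.mpr fun i => ?_
    fin_cases i
    · exact (contDiff_euclidean.mp contDiff_id 0).contDiffAt
    · exact (contDiff_euclidean.mp contDiff_id 1).contDiffAt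
  exact (contDiff_euclidean.mp contDiff_id 2).contDiffAt.sub (hf.comp x hbase)

lemma hasGradientAt_heightAboveGraph {f : (Fin 2 → ℝ) → ℝ} {g : Fin 2 → ℝ}
    {x : EuclideanSpace ℝ (Fin 3)}
    (hf : HasFDerivAt f (∑ i, g i • (ContinuousLinearMap.proj i : StrongDual ℝ (Fin 2 → ℝ)))
      ![x 0, x 1]) :
    HasGradientAt (heightAboveGraph f) (e3 (-g 0) (-g 1) 1) x := by
  let coord (i : Fin 3) : StrongDual ℝ (EuclideanSpace ℝ (Fin 3)) := EuclideanSpace.proj i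
  have hbase : HasFDerivAt (fun x : EuclideanSpace ℝ (Fin 3) => ![x 0, x 1])
      (ContinuousLinearMap.pi ![coord 0, coord 1]) x := by
    refine hasFDerivAt_pi.mpr fun i => ?_
    fin_cases i
    exacts [(coord 0).hasFDerivAt, (coord 1).hasFDerivAt]
  refine ((coord 2).hasFDerivAt.sub (hf.comp x hbase)).congr_fderiv ?_
  ext y
  simp [e3, PiLp.inner_apply, Fin.sum_univ_succ, coord]
  ring

lemma linearIndependent_e3_and_notMem_span {a b : ℝ} {g : Fin 2 → Fin 2 → ℝ}
    (hLI : LinearIndependent ℝ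
      ![(![a, b, 0] : Fin 3 → ℝ), ![-g 0 0, -g 0 1, 1], ![-g 1 0, -g 1 1, 1]]) :
    LinearIndependent ℝ (fun i => e3 (-g i 0) (-g i 1) 1) ∧
      e3 a b 0 ∉ Submodule.span ℝ (range fun i => e3 (-g i 0) (-g i 1) 1) := by
  have hmap := hLI.map' (WithLp.linearEquiv 2 ℝ (Fin 3 → ℝ)).symm.toLinearMap (LinearEquiv.ker _)
  have hcons : (WithLp.linearEquiv 2 ℝ (Fin 3 → ℝ)).symm.toLinearMap ∘
      ![![a, b, 0], ![-g 0 0, -g 0 1, 1], ![-g 1 0, -g 1 1, 1]] =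
        Fin.cons (e3 a b 0) fun i => e3 (-g i 0) (-g i 1) 1 := by
    ext1 i
    fin_cases i <;> rfl
  exact linearIndependent_finCons.mp (hcons ▸ hmap)

lemma e3_ne_zero {α₁ α₂ α₃ : ℝ} (hα : (α₁, α₂) ≠ (0, 0)) : e3 α₁ α₂ α₃ ≠ 0 := by
  rw [← e3_zero, Ne, e3_inj]
  exact fun ⟨h₁, h₂, _⟩ => hα (Prod.ext h₁ h₂)

lemma e3_mem_span_singleton_iff {a b α₁ α₂ : ℝ} (hα : (α₁, α₂) ≠ (0, 0)) :
    e3 α₁ α₂ 0 ∈ ℝ ∙ e3 a b 0 ↔ ∃ c : ℝ, c ≠ 0 ∧ a = c * α₁ ∧ b = c * α₂ := by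
  simp only [Submodule.mem_span_singleton, smul_e3, mul_zero, e3_inj, and_true]
  constructor
  · rintro ⟨t, rfl, rfl⟩
    have ht : t ≠ 0 := by
      rintro rfl
      simp at hα
    exact ⟨t⁻¹, inv_ne_zero ht, (inv_mul_cancel_left₀ ht a).symm, (inv_mul_cancel_left₀ ht b).symm⟩
  · rintro ⟨c, hc, rfl, rfl⟩
    exact ⟨c⁻¹, inv_mul_cancel_left₀ hc α₁, inv_mul_cancel_left₀ hc α₂⟩

lemma notMem_span_or_exists_eq_smul_add_sum {a b α₁ α₂ β₁ β₂ β₃ : ℝ} {g₁ g₂ : Fin 2 → ℝ}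
    (hα : (α₁, α₂) ≠ (0, 0))
    (hcase : (∀ c : ℝ, c ≠ 0 → ¬(a = c * α₁ ∧ b = c * α₂)) ∨
      ((∃ c : ℝ, c ≠ 0 ∧ a = c * α₁ ∧ b = c * α₂) ∧
        ∃ lam₁ lam₂ μ : ℝ,
          (β₁ = lam₁ * (-g₁ 0) + lam₂ * (-g₂ 0) + μ * a ∧
           β₂ = lam₁ * (-g₁ 1) + lam₂ * (-g₂ 1) + μ * b ∧
           β₃ = lam₁ + lam₂) ∧
          lam₁ * lam₂ < 0)) :
    e3 α₁ α₂ 0 ∉ ℝ ∙ e3 a b 0 ∨ e3 α₁ α₂ 0 ∈ ℝ ∙ e3 a b 0 ∧ ∃ (μ : ℝ) (lam : Fin 2 → ℝ),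
      e3 β₁ β₂ β₃ = μ • e3 a b 0 + ∑ i, lam i • e3 (-![g₁, g₂] i 0) (-![g₁, g₂] i 1) 1 ∧
        lam 0 * lam 1 < 0 := by
  rw [e3_mem_span_singleton_iff hα]
  refine hcase.imp (fun hne ⟨c, hc, hab⟩ => hne c hc hab) (And.imp_right ?_)
  rintro ⟨lam₁, lam₂, μ, ⟨rfl, rfl, rfl⟩, hlam⟩
  refine ⟨μ, ![lam₁, lam₂], ?_, hlam⟩
  rw [Fin.sum_univ_two, smul_e3, smul_e3, smul_e3, e3_add, e3_add]
  congr 1 <;> simp <;> ring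

theorem eventually_forall_isMetricProj_not_forall_heightAboveGraph_eq_zero
    {f : Fin 2 → (Fin 2 → ℝ) → ℝ} {g : Fin 2 → Fin 2 → ℝ} (hf : ∀ i, ContDiffAt ℝ 1 (f i) 0)
    (hg : ∀ i, HasFDerivAt (f i)
      (∑ j, g i j • (ContinuousLinearMap.proj j : StrongDual ℝ (Fin 2 → ℝ))) 0)
    {φ : ℝ → EuclideanSpace ℝ (Fin 3)} {d α β : EuclideanSpace ℝ (Fin 3)}
    (hn : LinearIndependent ℝ fun i => e3 (-g i 0) (-g i 1) 1)
    (hd : d ∉ Submodule.span ℝ (range fun i => e3 (-g i 0) (-g i 1) 1))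
    (hφ : ContDiffAt ℝ 1 φ 0) (hα : α ≠ 0) (hd₂ : d 2 = 0) (hα₂ : α 2 = 0)
    (hexp : (fun s => φ s - s • α - s ^ 2 • β) =o[𝓝 0] fun s => s ^ 2)
    (hzero : ∀ᶠ s in 𝓝 0, ∀ i, heightAboveGraph (f i) (φ s) = 0)
    (hcase : α ∉ ℝ ∙ d ∨ α ∈ ℝ ∙ d ∧ ∃ (μ : ℝ) (lam : Fin 2 → ℝ),
      β = μ • d + ∑ i, lam i • e3 (-g i 0) (-g i 1) 1 ∧ lam 0 * lam 1 < 0) :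
    ∀ᶠ p in 𝓝 0, p ∈ ℝ ∙ d → p ≠ 0 → ∀ w,
      IsMetricProj {x | ∀ i, 0 ≤ heightAboveGraph (f i) x} p w →
        ¬∀ i, heightAboveGraph (f i) w = 0 := by
  have hφ₀ : φ 0 = 0 := apply_zero_eq_zero_of_isLittleO_sq hexp
  have hbase : ![φ 0 0, φ 0 1] = 0 := by simp [hφ₀]
  have hgrad (i : Fin 2) : ∇ (heightAboveGraph (f i)) (φ 0) = e3 (-g i 0) (-g i 1) 1 :=
    (hasGradientAt_heightAboveGraph (hbase ▸ hg i)).gradient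
  have hstrict : HasStrictDerivAt φ α 0 := by
    rw [← (hasDerivAt_zero_of_isLittleO_sq hexp).deriv]
    exact hφ.hasStrictDerivAt one_ne_zero
  obtain ⟨τ, k, lam, hlead, hlam⟩ := exists_isLittleO_pow_of_isLittleO_sq
    finrank_euclideanSpace_fin hn hd (z := EuclideanSpace.proj 2) (fun i => rfl) hd₂ hα₂ hexp hcase
  simp only [← hgrad] at hn hd hlead
  have hmain := eventually_forall_isMetricProj_not_forall_eq_zero
    (by simp) (fun i => contDiffAt_heightAboveGraph (hbase ▸ hf i)) hn hd hstrict hα hzero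
    (hlead.congr_left fun s => by rw [hφ₀, sub_zero]) (fun s hs => pow_ne_zero k hs) hlam
  simpa only [hφ₀, sub_zero] using hmain

theorem stmt11_general {f₁ f₂ : (Fin 2 → ℝ) → ℝ} {g₁ g₂ : Fin 2 → ℝ}
    (hf₁ : ContDiffAt ℝ 1 f₁ 0) (hf₂ : ContDiffAt ℝ 1 f₂ 0)
    (hg₁ : HasFDerivAt f₁ (∑ i, g₁ i • (ContinuousLinearMap.proj i : StrongDual ℝ (Fin 2 → ℝ))) 0)
    (hg₂ : HasFDerivAt f₂ (∑ i, g₂ i • (ContinuousLinearMap.proj i : StrongDual ℝ (Fin 2 → ℝ))) 0)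
    {A C : Set (EuclideanSpace ℝ (Fin 3))}
    (hA : A = {p | f₁ ![p 0, p 1] ≤ p 2 ∧ f₂ ![p 0, p 1] ≤ p 2})
    (hC : C = {p | p 2 = f₁ ![p 0, p 1] ∧ p 2 = f₂ ![p 0, p 1]})
    {φ₁ φ₂ φ₃ : ℝ → ℝ} (hφ₁ : ContDiffAt ℝ 1 φ₁ 0) (hφ₂ : ContDiffAt ℝ 1 φ₂ 0)
    (hφ₃ : ContDiffAt ℝ 1 φ₃ 0) {α₁ α₂ β₁ β₂ β₃ : ℝ} (hα : (α₁, α₂) ≠ (0, 0))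
    (hexp₁ : (fun s => φ₁ s - α₁ * s - β₁ * s ^ 2) =o[𝓝 0] fun s => s ^ 2)
    (hexp₂ : (fun s => φ₂ s - α₂ * s - β₂ * s ^ 2) =o[𝓝 0] fun s => s ^ 2)
    (hexp₃ : (fun s => φ₃ s - β₃ * s ^ 2) =o[𝓝 0] fun s => s ^ 2)
    (hφC : ∀ᶠ s in 𝓝 0, e3 (φ₁ s) (φ₂ s) (φ₃ s) ∈ C) {a b : ℝ}
    {B : Set (EuclideanSpace ℝ (Fin 3))} (hB : B = range fun t : ℝ => t • e3 a b 0)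
    (hLI : LinearIndependent ℝ
      ![(![a, b, 0] : Fin 3 → ℝ), ![-g₁ 0, -g₁ 1, 1], ![-g₂ 0, -g₂ 1, 1]])
    (hcase : (∀ c : ℝ, c ≠ 0 → ¬(a = c * α₁ ∧ b = c * α₂)) ∨
      ((∃ c : ℝ, c ≠ 0 ∧ a = c * α₁ ∧ b = c * α₂) ∧
        ∃ lam₁ lam₂ μ : ℝ,
          (β₁ = lam₁ * (-g₁ 0) + lam₂ * (-g₂ 0) + μ * a ∧
           β₂ = lam₁ * (-g₁ 1) + lam₂ * (-g₂ 1) + μ * b ∧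
           β₃ = lam₁ + lam₂) ∧
          lam₁ * lam₂ < 0)) :
    ∃ ε : ℝ, 0 < ε ∧ ∀ p ∈ B, 0 < ‖p‖ → ‖p‖ < ε → ∀ w, IsMetricProj A p w → w ∉ C := by
  subst hA hB hC
  obtain ⟨hn, hd⟩ := linearIndependent_e3_and_notMem_span (g := ![g₁, g₂]) hLI
  have hexp : (fun s => e3 (φ₁ s) (φ₂ s) (φ₃ s) - s • e3 α₁ α₂ 0 - s ^ 2 • e3 β₁ β₂ β₃)
      =o[𝓝 0] fun s => s ^ 2 :=
    (isLittleO_e3 hexp₁ hexp₂ hexp₃).congr_left fun s => by simp [smul_e3, e3_sub, mul_comm]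
  have hmain := eventually_forall_isMetricProj_not_forall_heightAboveGraph_eq_zero
    (f := ![f₁, f₂]) (g := ![g₁, g₂]) (Fin.forall_fin_two.mpr ⟨hf₁, hf₂⟩)
    (Fin.forall_fin_two.mpr ⟨hg₁, hg₂⟩) hn hd (contDiffAt_e3 hφ₁ hφ₂ hφ₃) (e3_ne_zero hα) rfl rfl
    hexp (by simpa [heightAboveGraph, sub_eq_zero] using hφC)
    (notMem_span_or_exists_eq_smul_add_sum hα hcase)
  obtain ⟨ε, hε, hball⟩ := Metric.eventually_nhds_iff.mp hmain
  refine ⟨ε, hε, fun p hp hpne hpε w hw hwC => ?_⟩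
  exact hball (by simpa using hpε) (Submodule.mem_span_singleton.mpr hp) (norm_pos_iff.mp hpne) w
    (by simpa [heightAboveGraph] using hw) (by simpa [heightAboveGraph, sub_eq_zero] using hwC)

end Graph

theorem stmt11 (f₁ f₂ : MvPolynomial (Fin 2) ℝ)
    (hconv₁ : ConvexOn ℝ Set.univ (fun v : Fin 2 → ℝ => MvPolynomial.eval v f₁))
    (hconv₂ : ConvexOn ℝ Set.univ (fun v : Fin 2 → ℝ => MvPolynomial.eval v f₂))
    (h₁0 : MvPolynomial.eval (0 : Fin 2 → ℝ) f₁ = 0)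
    (h₂0 : MvPolynomial.eval (0 : Fin 2 → ℝ) f₂ = 0)
    (A : Set (EuclideanSpace ℝ (Fin 3)))
    (hA : A = {p | MvPolynomial.eval ![p 0, p 1] f₁ ≤ p 2 ∧
                   MvPolynomial.eval ![p 0, p 1] f₂ ≤ p 2})
    (C : Set (EuclideanSpace ℝ (Fin 3)))
    (hC : C = {p | p 2 = MvPolynomial.eval ![p 0, p 1] f₁ ∧
                   p 2 = MvPolynomial.eval ![p 0, p 1] f₂})
    (φ₁ φ₂ φ₃ : ℝ → ℝ)
    (hφa₁ : AnalyticAt ℝ φ₁ 0) (hφa₂ : AnalyticAt ℝ φ₂ 0) (hφa₃ : AnalyticAt ℝ φ₃ 0)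
    (α₁ α₂ β₁ β₂ β₃ : ℝ) (hα : (α₁, α₂) ≠ (0, 0))
    (hexp₁ : (fun s : ℝ => φ₁ s - α₁ * s - β₁ * s ^ 2) =O[nhds 0] fun s : ℝ => s ^ 3)
    (hexp₂ : (fun s : ℝ => φ₂ s - α₂ * s - β₂ * s ^ 2) =O[nhds 0] fun s : ℝ => s ^ 3)
    (hexp₃ : (fun s : ℝ => φ₃ s - β₃ * s ^ 2) =O[nhds 0] fun s : ℝ => s ^ 3)
    (hφC : ∀ᶠ s in nhds (0 : ℝ), e3 (φ₁ s) (φ₂ s) (φ₃ s) ∈ C)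
    (a b : ℝ) (B : Set (EuclideanSpace ℝ (Fin 3)))
    (hB : B = Set.range (fun t : ℝ => t • e3 a b 0))
    (hLI : LinearIndependent ℝ
      ![(![a, b, 0] : Fin 3 → ℝ),
        ![-MvPolynomial.eval (0 : Fin 2 → ℝ) (MvPolynomial.pderiv 0 f₁),
          -MvPolynomial.eval (0 : Fin 2 → ℝ) (MvPolynomial.pderiv 1 f₁), 1],
        ![-MvPolynomial.eval (0 : Fin 2 → ℝ) (MvPolynomial.pderiv 0 f₂),
          -MvPolynomial.eval (0 : Fin 2 → ℝ) (MvPolynomial.pderiv 1 f₂), 1]])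
    (hcover : ∃ U ∈ nhds (0 : EuclideanSpace ℝ (Fin 3)),
      C ∩ U ⊆ Set.range (fun s : ℝ => e3 (φ₁ s) (φ₂ s) (φ₃ s)))
    (hcase : (∀ c : ℝ, c ≠ 0 → ¬(a = c * α₁ ∧ b = c * α₂)) ∨
      ((∃ c : ℝ, c ≠ 0 ∧ a = c * α₁ ∧ b = c * α₂) ∧
        ∃ lam₁ lam₂ μ : ℝ,
          (β₁ = lam₁ * (-MvPolynomial.eval (0 : Fin 2 → ℝ) (MvPolynomial.pderiv 0 f₁)) +
                lam₂ * (-MvPolynomial.eval (0 : Fin 2 → ℝ) (MvPolynomial.pderiv 0 f₂)) + μ * a ∧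
           β₂ = lam₁ * (-MvPolynomial.eval (0 : Fin 2 → ℝ) (MvPolynomial.pderiv 1 f₁)) +
                lam₂ * (-MvPolynomial.eval (0 : Fin 2 → ℝ) (MvPolynomial.pderiv 1 f₂)) + μ * b ∧
           β₃ = lam₁ + lam₂) ∧
          lam₁ * lam₂ < 0)) :
    ∃ ε : ℝ, 0 < ε ∧ ∀ p ∈ B, 0 < ‖p‖ → ‖p‖ < ε → ∀ w, IsMetricProj A p w → w ∉ C := by
  have hcube : (fun s : ℝ => s ^ 3) =o[𝓝 0] fun s => s ^ 2 := isLittleO_pow_pow (by norm_num)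
  exact stmt11_general (contDiffAt_mvPolynomial_eval f₁ 0) (contDiffAt_mvPolynomial_eval f₂ 0)
    (hasFDerivAt_mvPolynomial_eval f₁ 0) (hasFDerivAt_mvPolynomial_eval f₂ 0) hA hC
    hφa₁.contDiffAt hφa₂.contDiffAt hφa₃.contDiffAt hα (hexp₁.trans_isLittleO hcube)
    (hexp₂.trans_isLittleO hcube) (hexp₃.trans_isLittleO hcube) hφC hB hLI hcase
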